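/- arXiv:0806.3874 — 2 statements merged into one kernel-verified Lean document; each statement's English description precedes it below -/
import Mathlib

section
/- The dimension of the cone K_{t,⪰} (i.e. the dimension of its linear span inside (ℝ[x]_t)*) equals the dimension of (H_t ∪ W_t)^⊥, the space of linear functionals on ℝ[x]_t vanishing on H_t ∪ W_t. -/
open MvPolynomial

noncomputable section

/-- The polynomial ring `ℝ[x₁,…,xₙ]`. -/
abbrev MP (n : ℕ) := MvPolynomial (Fin n) ℝ

/-- The total degree `|α|` of a monomial exponent `α`. -/
def mdeg {n : ℕ} (α : Fin n →₀ ℕ) : ℕ := α.sum fun _ e => e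

/-- The subspace `ℝ[x]_t` of polynomials of total degree at most `t`. -/
abbrev RxT (n t : ℕ) : Submodule ℝ (MP n) := restrictTotalDegree (Fin n) ℝ t

/-- The kernel of the moment matrix `M_s(L)`: polynomials `p` of degree at most `s` such that
`L(p·x^β) = 0` for all monomials `x^β` of degree at most `s`. -/
def momKer {n : ℕ} (L : Module.Dual ℝ (MP n)) (s : ℕ) : Set (MP n) :=
  {p | p.totalDegree ≤ s ∧ ∀ β : Fin n →₀ ℕ, mdeg β ≤ s → L (p * monomial β 1) = 0}

/-- Positive semidefiniteness of the moment matrix `M_t(L)`: `L(p²) ≥ 0` for all `p ∈ ℝ[x]_t`. -/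
def momPSD {n : ℕ} (L : Module.Dual ℝ (MP n)) (t : ℕ) : Prop :=
  ∀ p : MP n, p.totalDegree ≤ t → 0 ≤ L (p * p)

/-- The bilinear/moment form of order `s` associated to `L`, as a map `ℝ[x]_s → (ℝ[x]_s)*`;
its matrix in the monomial basis is the moment matrix `M_s(L)`. -/
def momBil {n : ℕ} (L : Module.Dual ℝ (MP n)) (s : ℕ) :
    RxT n s →ₗ[ℝ] Module.Dual ℝ (RxT n s) :=
  LinearMap.mk₂ ℝ (fun p q => L ((p : MP n) * (q : MP n)))
    (fun p p' q => by simp [add_mul])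
    (fun c p q => by simp [smul_mul_assoc])
    (fun p q q' => by simp [mul_add])
    (fun c p q => by simp [mul_smul_comm])

/-- The rank of the moment matrix `M_s(L)`. -/
def momRank {n : ℕ} (L : Module.Dual ℝ (MP n)) (s : ℕ) : ℕ :=
  Module.finrank ℝ (LinearMap.range (momBil L s))

/-- The column of the moment matrix `M_s(L)` indexed by the monomial `β`. -/
def momCol {n : ℕ} (L : Module.Dual ℝ (MP n)) (s : ℕ) (β : Fin n →₀ ℕ) :
    {α : Fin n →₀ ℕ // mdeg α ≤ s} → ℝ :=
  fun α => L (monomial (α.1 + β) 1)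

/-- `G^⊥`: linear functionals vanishing on the set `G`. -/
def annih {n : ℕ} (G : Set (MP n)) : Submodule ℝ (Module.Dual ℝ (MP n)) :=
  (Submodule.span ℝ G).dualAnnihilator

/-- The projection `π_s` sending a linear functional to its restriction to `ℝ[x]_s`. -/
def projDual (n s : ℕ) : Module.Dual ℝ (MP n) →ₗ[ℝ] Module.Dual ℝ (RxT n s) :=
  (RxT n s).subtype.dualMap

/-- `dim π_s(G^⊥)`. -/
def dimProj {n : ℕ} (s : ℕ) (G : Set (MP n)) : ℕ :=
  Module.finrank ℝ (Submodule.map (projDual n s) (annih G))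

/-- The one-degree prolongation `S⁺ = S ∪ x₁S ∪ … ∪ xₙS` of a set of polynomials. -/
def plusOp {n : ℕ} (G : Set (MP n)) : Set (MP n) :=
  G ∪ ⋃ i : Fin n, (fun p => X i * p) '' G

/-- The set `H_t = {x^α h_j : |α| + deg h_j ≤ t}` of prolongations of the generators. -/
def Hset {n m : ℕ} (h : Fin m → MP n) (t : ℕ) : Set (MP n) :=
  {p | ∃ (α : Fin n →₀ ℕ) (j : Fin m), mdeg α + (h j).totalDegree ≤ t ∧ p = monomial α 1 * h j}

/-- The cone `K_{t,⪰}` of linear functionals vanishing on `H_t` with `M_{⌊t/2⌋}(L) ⪰ 0`. -/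
def Kpos {n m : ℕ} (h : Fin m → MP n) (t : ℕ) : Set (Module.Dual ℝ (MP n)) :=
  {L | (∀ g ∈ Hset h t, L g = 0) ∧ momPSD L (t / 2)}

/-- `L*` is generic in `K_{t,⪰}`: it belongs to `K_{t,⪰}` and its moment matrix
`M_{⌊t/2⌋}(L*)` has maximum rank over `K_{t,⪰}`. -/
def Generic {n m : ℕ} (h : Fin m → MP n) (t : ℕ) (Ls : Module.Dual ℝ (MP n)) : Prop :=
  Ls ∈ Kpos h t ∧ ∀ L ∈ Kpos h t, momRank L (t / 2) ≤ momRank Ls (t / 2)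

/-- `W_t = {x^α g : |α| ≤ ⌊t/2⌋, g ∈ N_t}`, with `N_t = Ker M_{⌊t/2⌋}(L*)` for `L*` generic. -/
def Wset {n m : ℕ} (h : Fin m → MP n) (t : ℕ) (Ls : Module.Dual ℝ (MP n)) : Set (MP n) :=
  {p | ∃ (α : Fin n →₀ ℕ) (g : MP n), mdeg α ≤ t / 2 ∧ g ∈ momKer Ls (t / 2) ∧
    p = monomial α 1 * g}

/-- The real radical `√[ℝ]I` of an ideal `I`. -/
def realRad {n : ℕ} (I : Ideal (MP n)) : Set (MP n) :=
  {p | ∃ m : ℕ, 0 < m ∧ ∃ (k : ℕ) (q : Fin k → MP n), p ^ (2 * m) + ∑ j, q j ^ 2 ∈ I}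

/-- A set of monomials closed under taking divisions. -/
def DivClosed {n : ℕ} (B : Set (Fin n →₀ ℕ)) : Prop :=
  ∀ a ∈ B, ∀ a' : Fin n →₀ ℕ, a' ≤ a → a' ∈ B

/-- A set of monomials connected to 1: each `m ∈ B` is a product `m = m₁⋯m_k` with `m₁ = 1`
and all partial products `m₁⋯m_h ∈ B` (written additively on exponents). -/
def ConnectedToOne {n : ℕ} (B : Set (Fin n →₀ ℕ)) : Prop :=
  ∀ a ∈ B, ∃ (k : ℕ) (c : Fin (k + 1) → (Fin n →₀ ℕ)),
    c 0 = 0 ∧ (∀ j : Fin (k + 1), (∑ i ∈ Finset.univ.filter (· ≤ j), c i) ∈ B) ∧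
    (∑ i, c i) = a

/-- `Span_ℝ(B)` for a set `B` of monomials. -/
def spanMon {n : ℕ} (B : Set (Fin n →₀ ℕ)) : Submodule ℝ (MP n) :=
  Submodule.span ℝ ((fun a => (monomial a 1 : MP n)) '' B)

/-- The border `∂B = B⁺ \ B` of a set of monomials. -/
def borderSet {n : ℕ} (B : Set (Fin n →₀ ℕ)) : Set (Fin n →₀ ℕ) :=
  {a | a ∉ B ∧ ∃ i : Fin n, ∃ b ∈ B, a = b + Finsupp.single i 1}

end

/-!
Two positive semidefinite forms `B₁`, `B₂` satisfy `ker (B₁ + B₂) = ker B₁ ⊓ ker B₂`, so adding an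
element of the cone to a generic one cannot shrink its kernel: the kernel of a generic moment form
is contained in that of every element of the cone, i.e. every element of the cone vanishes on `W_t`.

Conversely, let `A` be symmetric with kernel containing that of a positive semidefinite form `B`.
Diagonalizing `A` writes `A v v` as a combination of squares `φ v ^ 2` of functionals `φ` that
vanish on `ker B`. Such a `φ` is of the form `B w`, so `φ v ^ 2 ≤ B w w * B v v` by Cauchy-Schwarz,
and `c • B + A` is positive semidefinite for large `c`. Hence every `L` vanishing on `H_t ∪ W_t` is
the difference `(c • L* + L) - c • L*` of two elements of the span of the cone.
-/

section BilinForm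

open Module LinearMap.BilinForm
open LinearMap (ker range mem_ker)

/-- The indices with `A (e i) (e i) = 0` contribute nothing, in accordance with `0⁻¹ = 0`. -/
theorem apply_self_eq_sum_of_isOrthoᵢ {ι K V : Type*} [Field K] [AddCommGroup V] [Module K V]
    [Fintype ι] {A : V →ₗ[K] V →ₗ[K] K} {e : Basis ι K V} (he : A.IsOrthoᵢ e) (v : V) :
    A v v = ∑ i, (A (e i) (e i))⁻¹ * A (e i) v ^ 2 := by
  have apply_basis (i : ι) : A (e i) v = e.repr v i * A (e i) (e i) := by
    conv_lhs => rw [← e.sum_repr v]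
    rw [map_sum, Finset.sum_eq_single i]
    · rw [map_smul, smul_eq_mul]
    · intro j _ hji
      have ortho : A (e i) (e j) = 0 := he hji.symm
      rw [map_smul, ortho, smul_zero]
    · exact fun hi => absurd (Finset.mem_univ i) hi
  calc A v v = A (∑ i, e.repr v i • e i) v := by rw [e.sum_repr]
    _ = ∑ i, e.repr v i * A (e i) v := by
        simp only [map_sum, map_smul, LinearMap.sum_apply, LinearMap.smul_apply, smul_eq_mul]
    _ = ∑ i, (A (e i) (e i))⁻¹ * A (e i) v ^ 2 := by
        refine Finset.sum_congr rfl fun i _ => ?_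
        rw [apply_basis]
        by_cases hi : A (e i) (e i) = 0
        · simp [hi]
        · field_simp

/-- The spectrahedral cone cut out in a subspace `F` by the linear family `Φ` of bilinear forms:
the parameters `x ∈ F` for which `Φ x` is positive semidefinite. The truncated moment cone
`K_{t,⪰}` is of this shape, with `F = H_t^⊥` and `Φ` sending `L` to its moment form. -/
def spectrahedralCone {K E V : Type*} [CommSemiring K] [LE K] [AddCommMonoid E] [Module K E]
    [AddCommMonoid V] [Module K V] (F : Submodule K E) (Φ : E →ₗ[K] V →ₗ[K] V →ₗ[K] K) : Set E :=
  {x | x ∈ F ∧ (Φ x).IsPosSemidef}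

variable {K V : Type*} [Field K] [LinearOrder K] [IsStrictOrderedRing K] [AddCommGroup V]
  [Module K V] {A B B₁ B₂ : V →ₗ[K] V →ₗ[K] K}

theorem ker_add_of_isPosSemidef (h₁ : B₁.IsPosSemidef) (h₂ : B₂.IsPosSemidef) :
    ker (B₁ + B₂) = ker B₁ ⊓ ker B₂ := by
  have h₁₂ := h₁.add h₂
  ext v
  rw [Submodule.mem_inf, ← apply_apply_same_eq_zero_iff _ h₁₂.nonneg h₁₂.isSymm,
    ← apply_apply_same_eq_zero_iff _ h₁.nonneg h₁.isSymm,
    ← apply_apply_same_eq_zero_iff _ h₂.nonneg h₂.isSymm]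
  exact add_eq_zero_iff_of_nonneg (h₁.nonneg v) (h₂.nonneg v)

variable [FiniteDimensional K V]

theorem ker_le_ker_of_finrank_range_add_le (h₁ : B₁.IsPosSemidef) (h₂ : B₂.IsPosSemidef)
    (hrank : finrank K (range (B₁ + B₂)) ≤ finrank K (range B₁)) : ker B₁ ≤ ker B₂ := by
  have ker_add := ker_add_of_isPosSemidef h₁ h₂
  have ker_add_eq_left : ker (B₁ + B₂) = ker B₁ := by
    refine Submodule.eq_of_le_of_finrank_le (ker_add.trans_le inf_le_left) ?_
    have := LinearMap.finrank_range_add_finrank_ker B₁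
    have := LinearMap.finrank_range_add_finrank_ker (B₁ + B₂)
    lia
  rw [← inf_eq_left, ← ker_add, ker_add_eq_left]

theorem exists_forall_sq_le_mul_apply_self (hB : B.IsPosSemidef) {φ : Dual K V}
    (hφ : ker B ≤ ker φ) : ∃ c, ∀ v, φ v ^ 2 ≤ c * B v v := by
  have φ_mem_range : φ ∈ range B := by
    rw [LinearMap.isSymm_iff_eq_flip.1 hB.isSymm, ← LinearMap.dualAnnihilator_ker_eq_range_flip,
      Submodule.mem_dualAnnihilator]
    exact hφ
  obtain ⟨w, rfl⟩ := φ_mem_range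
  exact ⟨B w w, apply_sq_le_of_symm B hB.nonneg hB.isSymm w⟩

theorem exists_isPosSemidef_smul_add (hB : B.IsPosSemidef) (hA : A.IsSymm) (hker : ker B ≤ ker A) :
    ∃ c : K, (c • B + A).IsPosSemidef := by
  let : Invertible (2 : K) := invertibleOfNonzero two_ne_zero
  obtain ⟨e, he⟩ := exists_orthogonal_basis hA
  have ker_le_ker_apply (i) : ker B ≤ ker (A (e i)) := fun v hv => by
    rw [mem_ker, hA.isRefl.eq_iff, hker hv, LinearMap.zero_apply]
  choose c hc using fun i => exists_forall_sq_le_mul_apply_self hB (ker_le_ker_apply i)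
  have isSymm_smul_add (b : K) : (b • B + A).IsSymm :=
    (isSymm_iff.1 ((isSymm_iff.2 hB.isSymm).smul b)).add hA
  refine ⟨∑ i, |(A (e i) (e i))⁻¹| * c i, isSymm_smul_add _, ⟨fun v => ?_⟩⟩
  rw [LinearMap.add_apply, LinearMap.add_apply, LinearMap.smul_apply, LinearMap.smul_apply,
    smul_eq_mul, apply_self_eq_sum_of_isOrthoᵢ he v, Finset.sum_mul, ← Finset.sum_add_distrib]
  refine Finset.sum_nonneg fun i _ => ?_
  calc 0 ≤ |(A (e i) (e i))⁻¹| * (c i * B v v - A (e i) v ^ 2) :=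
        mul_nonneg (abs_nonneg _) (sub_nonneg.2 (hc i v))
    _ = |(A (e i) (e i))⁻¹| * c i * B v v + -|(A (e i) (e i))⁻¹| * A (e i) v ^ 2 := by ring
    _ ≤ |(A (e i) (e i))⁻¹| * c i * B v v + (A (e i) (e i))⁻¹ * A (e i) v ^ 2 := by
        gcongr
        exact neg_abs_le _

variable {E : Type*} [AddCommGroup E] [Module K E] {F : Submodule K E}
  {Φ : E →ₗ[K] V →ₗ[K] V →ₗ[K] K} {x₀ x : E}

theorem ker_le_ker_of_mem_span_spectrahedralCone (hx₀ : x₀ ∈ spectrahedralCone F Φ)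
    (hmax : ∀ x ∈ spectrahedralCone F Φ, finrank K (range (Φ x)) ≤ finrank K (range (Φ x₀)))
    (hx : x ∈ Submodule.span K (spectrahedralCone F Φ)) : ker (Φ x₀) ≤ ker (Φ x) := by
  intro v hv
  suffices Submodule.span K (spectrahedralCone F Φ) ≤ ker (Φ.flip v) from this hx
  refine Submodule.span_le.2 fun y hy => ?_
  have hrank := hmax (x₀ + y) ⟨F.add_mem hx₀.1 hy.1, by rw [map_add]; exact hx₀.2.add hy.2⟩
  rw [map_add] at hrank
  exact ker_le_ker_of_finrank_range_add_le hx₀.2 hy.2 hrank hv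

theorem mem_span_spectrahedralCone_of_ker_le_ker (hx₀ : x₀ ∈ spectrahedralCone F Φ)
    (hxF : x ∈ F) (hx : (Φ x).IsSymm) (hker : ker (Φ x₀) ≤ ker (Φ x)) :
    x ∈ Submodule.span K (spectrahedralCone F Φ) := by
  obtain ⟨c, hc⟩ := exists_isPosSemidef_smul_add hx₀.2 hx hker
  have smul_add_mem : c • x₀ + x ∈ spectrahedralCone F Φ :=
    ⟨F.add_mem (F.smul_mem c hx₀.1) hxF, by rwa [map_add, map_smul]⟩
  rw [← add_sub_cancel_left (c • x₀) x]
  exact Submodule.sub_mem _ (Submodule.subset_span smul_add_mem)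
    (Submodule.smul_mem _ c (Submodule.subset_span hx₀))

theorem mem_span_spectrahedralCone_iff (hΦ : ∀ x ∈ F, (Φ x).IsSymm)
    (hx₀ : x₀ ∈ spectrahedralCone F Φ)
    (hmax : ∀ x ∈ spectrahedralCone F Φ, finrank K (range (Φ x)) ≤ finrank K (range (Φ x₀))) :
    x ∈ Submodule.span K (spectrahedralCone F Φ) ↔ x ∈ F ∧ ker (Φ x₀) ≤ ker (Φ x) := by
  constructor
  · exact fun hx => ⟨Submodule.span_le.2 (fun _ hy => hy.1) hx,
      ker_le_ker_of_mem_span_spectrahedralCone hx₀ hmax hx⟩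
  · exact fun ⟨hxF, hker⟩ => mem_span_spectrahedralCone_of_ker_le_ker hx₀ hxF (hΦ x hxF) hker

end BilinForm

section Moment

open LinearMap (ker)

theorem restrictTotalDegree_le_iff {σ R : Type*} [CommSemiring R] {s : ℕ}
    {W : Submodule R (MvPolynomial σ R)} :
    restrictTotalDegree σ R s ≤ W ↔
      ∀ β : σ →₀ ℕ, (β.sum fun _ e => e) ≤ s → monomial β 1 ∈ W := by
  rw [restrictTotalDegree, restrictSupport_eq_span, Submodule.span_le, Set.image_subset_iff]
  rfl

variable {n m s t : ℕ}

theorem mem_annih {G : Set (MP n)} {L : Module.Dual ℝ (MP n)} :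
    L ∈ annih G ↔ ∀ g ∈ G, L g = 0 := by
  rw [annih, Submodule.mem_dualAnnihilator]
  exact Submodule.span_le (p := ker L)

theorem momKer_eq_map_ker_momBil (L : Module.Dual ℝ (MP n)) :
    momKer L s = (ker (momBil L s)).map (RxT n s).subtype := by
  ext p
  have mem_momKer_iff :
      p ∈ momKer L s ↔ p ∈ RxT n s ∧ RxT n s ≤ ker (L ∘ₗ LinearMap.mulLeft ℝ p) :=
    and_congr (mem_restrictTotalDegree _ _ _).symm
      (restrictTotalDegree_le_iff (W := ker (L ∘ₗ LinearMap.mulLeft ℝ p))).symm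
  rw [mem_momKer_iff]
  constructor
  · rintro ⟨hp, hL⟩
    exact ⟨⟨p, hp⟩, LinearMap.ext fun q => hL q.2, rfl⟩
  · rintro ⟨p, hp, rfl⟩
    exact ⟨p.2, fun q hq => LinearMap.congr_fun hp ⟨q, hq⟩⟩

theorem mem_annih_Wset_iff {h : Fin m → MP n} {L Ls : Module.Dual ℝ (MP n)} :
    L ∈ annih (Wset h t Ls) ↔ ker (momBil Ls (t / 2)) ≤ ker (momBil L (t / 2)) := by
  have forall_Wset_iff : (∀ w ∈ Wset h t Ls, L w = 0) ↔ momKer Ls (t / 2) ⊆ momKer L (t / 2) := by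
    constructor
    · refine fun hL g hg => ⟨hg.1, fun α hα => ?_⟩
      rw [mul_comm]
      exact hL _ ⟨α, g, hα, hg, rfl⟩
    · rintro hsub _ ⟨α, g, hα, hg, rfl⟩
      rw [mul_comm]
      exact (hsub hg).2 α hα
  rw [mem_annih, forall_Wset_iff, momKer_eq_map_ker_momBil, momKer_eq_map_ker_momBil,
    SetLike.coe_subset_coe, Submodule.map_le_map_iff_of_injective (RxT n _).subtype_injective]

theorem isSymm_momBil (L : Module.Dual ℝ (MP n)) : (momBil L s).IsSymm :=
  ⟨fun p q => congrArg L (mul_comm (p : MP n) q)⟩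

theorem isPosSemidef_momBil_iff {L : Module.Dual ℝ (MP n)} :
    (momBil L s).IsPosSemidef ↔ momPSD L s := by
  constructor
  · exact fun hL p hp => hL.nonneg ⟨p, (mem_restrictTotalDegree _ _ _).2 hp⟩
  · exact fun hL => ⟨isSymm_momBil L, ⟨fun p => hL p ((mem_restrictTotalDegree _ _ _).1 p.2)⟩⟩

/-- The moment form `momBil L s` as a linear function of `L`; it is the family of forms that makes
`K_{t,⪰}` a spectrahedral cone. -/
noncomputable def momBilₗ (n s : ℕ) :
    Module.Dual ℝ (MP n) →ₗ[ℝ] RxT n s →ₗ[ℝ] Module.Dual ℝ (RxT n s) where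
  toFun L := momBil L s
  map_add' _ _ := rfl
  map_smul' _ _ := rfl

theorem Kpos_eq_spectrahedralCone (h : Fin m → MP n) :
    Kpos h t = spectrahedralCone (annih (Hset h t)) (momBilₗ n (t / 2)) :=
  Set.ext fun _ => and_congr mem_annih.symm isPosSemidef_momBil_iff.symm

theorem span_Kpos_eq_annih {h : Fin m → MP n} {Ls : Module.Dual ℝ (MP n)} (hgen : Generic h t Ls) :
    Submodule.span ℝ (Kpos h t) = annih (Hset h t ∪ Wset h t Ls) := by
  obtain ⟨hmem, hmax⟩ := hgen
  rw [Kpos_eq_spectrahedralCone] at hmem hmax ⊢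
  ext L
  calc L ∈ Submodule.span ℝ (spectrahedralCone (annih (Hset h t)) (momBilₗ n (t / 2)))
      ↔ L ∈ annih (Hset h t) ∧ ker (momBil Ls (t / 2)) ≤ ker (momBil L (t / 2)) :=
        mem_span_spectrahedralCone_iff (fun L _ => isSymm_momBil L) hmem hmax
    _ ↔ L ∈ annih (Hset h t) ∧ L ∈ annih (Wset h t Ls) := by rw [mem_annih_Wset_iff]
    _ ↔ L ∈ annih (Hset h t ∪ Wset h t Ls) := by
        simp only [mem_annih, Set.mem_union, or_imp, forall_and]

end Moment

/-- The dimension of the cone `K_{t,⪰}` (the dimension of its linear span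
inside `(ℝ[x]_t)*`) equals the dimension of `(H_t ∪ W_t)^⊥` (inside `(ℝ[x]_t)*`). -/
theorem dim_Kpos_eq_dim_annih {n m t : ℕ} (h : Fin m → MP n)
    (Lstar : Module.Dual ℝ (MP n)) (hgen : Generic h t Lstar) :
    Module.finrank ℝ (Submodule.map (projDual n t) (Submodule.span ℝ (Kpos h t))) =
      Module.finrank ℝ
        (Submodule.map (projDual n t) (annih (Hset h t ∪ Wset h t Lstar))) := by
  rw [span_Kpos_eq_annih hgen]
end

section
/- Assume the real variety V_ℝ(I) is finite. Then the real radical satisfies √[ℝ]I = ⋃_t Span_ℝ(G_t), where G_t = H_t ∪ W_t; that is, a polynomial p lies in √[ℝ]I if and only if p is a real linear combination of elements of H_t ∪ W_t for some t. Consequently, a linear functional L on ℝ[x] vanishes on √[ℝ]I if and only if L vanishes on G_t for every t. -/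
open MvPolynomial

/-!
If `B` is a bilinear map on a finite-dimensional real space such that `∑ i, B (x i) (x i)` vanishes
only for `x = 0`, then `0` is outside the compact convex hull of the values `B x x` on the unit
sphere, so some functional is positive on all `B x x` with `x ≠ 0`. For multiplication in the
formally real ring `ℝ[x] ⧸ √[ℝ]I` this yields, for each `t`, an element of the cone `K_{t,⪰}` that
vanishes on the real radical and is positive on the square of every `p ∈ ℝ[x]_{⌊t/2⌋}` outside it.
The kernel of its moment matrix lies in the real radical, and a generic kernel is the smallest one,
whence `N_t ⊆ √[ℝ]I`. Conversely, if `p ^ (2 * k) + σ ∈ I` with `σ` a sum of squares and `t` is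
large, then every `L ∈ K_{t,⪰}` has `L (p ^ (2 * k)) = -L σ ≤ 0`, so `p ^ k` lies in the kernel of
its moment matrix, and positivity lowers the exponent down to `p ∈ N_t`.
-/

section Separation

theorem convexHull_eq_biUnion_image_stdSimplex {𝕜 E : Type*} [Field 𝕜] [LinearOrder 𝕜]
    [IsStrictOrderedRing 𝕜] [AddCommGroup E] [Module 𝕜 E] [FiniteDimensional 𝕜 E] (s : Set E) :
    convexHull 𝕜 s = ⋃ k ∈ Set.Iic (Module.finrank 𝕜 E + 1),
      (fun p : (Fin k → 𝕜) × (Fin k → E) => ∑ i, p.1 i • p.2 i) ''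
        (stdSimplex 𝕜 (Fin k) ×ˢ Set.univ.pi fun _ => s) := by
  ext x
  simp only [Set.mem_iUnion, Set.mem_image, Set.mem_prod, Set.mem_univ_pi, Prod.exists]
  constructor
  · intro hx
    obtain ⟨ι, _, z, w, hz, hindep, hw, hw1, rfl⟩ := eq_pos_convex_span_of_mem_convexHull hx
    let e := (Fintype.equivFin ι).symm
    refine ⟨Fintype.card ι, hindep.card_le_finrank_succ.trans ?_, w ∘ e, z ∘ e,
      ⟨⟨fun i => (hw _).le, (e.sum_comp w).trans hw1⟩, fun i => hz ⟨_, rfl⟩⟩,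
      e.sum_comp fun i => w i • z i⟩
    gcongr
    exact Submodule.finrank_le _
  · rintro ⟨k, -, w, z, ⟨⟨hw, hw1⟩, hz⟩, rfl⟩
    exact mem_convexHull_of_exists_fintype w z hw hw1 hz rfl

theorem isCompact_convexHull {E : Type*} [AddCommGroup E] [Module ℝ E] [TopologicalSpace E]
    [ContinuousAdd E] [ContinuousSMul ℝ E] [FiniteDimensional ℝ E] {s : Set E}
    (hs : IsCompact s) : IsCompact (convexHull ℝ s) := by
  rw [convexHull_eq_biUnion_image_stdSimplex]
  refine (Set.finite_Iic _).isCompact_biUnion fun k _ => ?_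
  exact ((isCompact_stdSimplex ℝ (Fin k)).prod (isCompact_univ_pi fun _ => hs)).image (by fun_prop)

theorem exists_strongDual_pos_of_zero_notMem_convexHull {E : Type*} [AddCommGroup E] [Module ℝ E]
    [TopologicalSpace E] [IsTopologicalAddGroup E] [ContinuousSMul ℝ E] [LocallyConvexSpace ℝ E]
    [T2Space E] [FiniteDimensional ℝ E] {s : Set E} (hs : IsCompact s)
    (h0 : 0 ∉ convexHull ℝ s) : ∃ f : StrongDual ℝ E, ∀ x ∈ s, 0 < f x := by
  obtain ⟨f, u, hu, hf⟩ := geometric_hahn_banach_point_closed (convex_convexHull ℝ s)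
    (isCompact_convexHull hs).isClosed h0
  rw [map_zero] at hu
  exact ⟨f, fun x hx => hu.trans (hf x (subset_convexHull ℝ s hx))⟩

theorem exists_strongDual_bilin_self_pos {E F : Type*} [NormedAddCommGroup E] [NormedSpace ℝ E]
    [FiniteDimensional ℝ E] [NormedAddCommGroup F] [NormedSpace ℝ F] [FiniteDimensional ℝ F]
    (B : E →L[ℝ] E →L[ℝ] F)
    (hB : ∀ {ι : Type} [Fintype ι] (x : ι → E), ∑ i, B (x i) (x i) = 0 → x = 0) :
    ∃ f : StrongDual ℝ F, ∀ x ≠ 0, 0 < f (B x x) := by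
  have hcompact : IsCompact ((fun x => B x x) '' Metric.sphere 0 1) :=
    (isCompact_sphere 0 1).image (by fun_prop)
  have h0 : 0 ∉ convexHull ℝ ((fun x => B x x) '' Metric.sphere 0 1) := by
    rw [mem_convexHull_iff_exists_fintype]
    rintro ⟨ι, _, w, z, hw, hw1, hz, hsum⟩
    choose x hx hxz using hz
    -- The square roots of the weights turn the convex combination into a sum of diagonal values.
    have hscaled : (fun i => √(w i) • x i) = 0 := hB _ <| by
      simpa [smul_smul, Real.mul_self_sqrt (hw _), hxz] using hsum
    have hw0 : w = 0 := funext fun i => by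
      have hxi : x i ≠ 0 := ne_zero_of_mem_unit_sphere ⟨x i, hx i⟩
      simpa [hxi, Real.sqrt_eq_zero (hw i)] using congrFun hscaled i
    simp [hw0] at hw1
  obtain ⟨f, hf⟩ := exists_strongDual_pos_of_zero_notMem_convexHull hcompact h0
  refine ⟨f, fun x hx => ?_⟩
  have hunit : 0 < f (B (‖x‖⁻¹ • x) (‖x‖⁻¹ • x)) :=
    hf _ ⟨_, by simp [norm_smul, hx], rfl⟩
  have hnorm : 0 < ‖x‖⁻¹ := by positivity
  simp only [map_smul, smul_apply, smul_eq_mul] at hunit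
  exact pos_of_mul_pos_right (pos_of_mul_pos_right hunit hnorm.le) hnorm.le

theorem exists_linearMap_disjoint_ker {K V : Type*} [Field K] [AddCommGroup V] [Module K V]
    (W : Submodule K V) [FiniteDimensional K W] :
    ∃ ℓ : V →ₗ[K] (Fin (Module.finrank K W) → K), Disjoint W (LinearMap.ker ℓ) := by
  obtain ⟨r, hr⟩ := W.subtype.exists_leftInverse_of_injective W.ker_subtype
  refine ⟨(Module.finBasis K W).equivFun ∘ₗ r, Submodule.disjoint_def.2 fun w hw hℓ => ?_⟩
  have hrw : r w = ⟨w, hw⟩ := LinearMap.congr_fun hr ⟨w, hw⟩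
  simpa [hrw] using hℓ

theorem exists_dual_bilin_self_pos {E F : Type*} [AddCommGroup E] [Module ℝ E]
    [FiniteDimensional ℝ E] [AddCommGroup F] [Module ℝ F] (B : E →ₗ[ℝ] E →ₗ[ℝ] F)
    (hB : ∀ {ι : Type} [Fintype ι] (x : ι → E), ∑ i, B (x i) (x i) = 0 → x = 0) :
    ∃ f : Module.Dual ℝ F, ∀ x ≠ 0, 0 < f (B x x) := by
  let W : Submodule ℝ F := .map₂ B ⊤ ⊤
  have : FiniteDimensional ℝ W := .of_fg (.map₂ B Module.Finite.fg_top Module.Finite.fg_top)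
  obtain ⟨ℓ, hℓ⟩ := exists_linearMap_disjoint_ker W
  let e := (Module.finBasis ℝ E).equivFun
  obtain ⟨f, hf⟩ := exists_strongDual_bilin_self_pos
    ((B.compl₁₂ e.symm.toLinearMap e.symm.toLinearMap).compr₂ ℓ).toContinuousBilinearMap <| by
      intro ι _ x hx
      have hsum : ∑ i, B (e.symm (x i)) (e.symm (x i)) = 0 := by
        refine Submodule.disjoint_def.1 hℓ _ ?_ ?_
        · exact sum_mem fun i _ => Submodule.apply_mem_map₂ B trivial trivial
        · simpa using hx
      exact funext fun i => by simpa using congrFun (hB _ hsum) i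
  exact ⟨f.toLinearMap ∘ₗ ℓ, fun x hx => by simpa using hf (e x) (by simpa using hx)⟩

theorem eq_zero_of_sum_mul_self_eq_zero {R ι : Type*} [Ring R] [IsFormallyReal R] [Fintype ι]
    {x : ι → R} (hx : ∑ i, x i * x i = 0) : x = 0 := by
  classical
  funext i
  have hsplit : x i * x i + ∑ j ∈ Finset.univ.erase i, x j * x j = 0 := by
    rwa [Finset.add_sum_erase _ (fun j => x j * x j) (Finset.mem_univ i)]
  have hsq : x i * x i = 0 :=
    IsFormallyReal.eq_zero_of_add_right (.mul_self _) (.sum_mul_self _ _) hsplit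
  exact IsReduced.eq_zero _ ⟨2, (sq _).trans hsq⟩

theorem exists_dual_mul_self_pos {A : Type*} [Ring A] [Algebra ℝ A] [IsFormallyReal A]
    (V : Submodule ℝ A) [FiniteDimensional ℝ V] :
    ∃ f : Module.Dual ℝ A, ∀ a ∈ V, a ≠ 0 → 0 < f (a * a) := by
  obtain ⟨f, hf⟩ := exists_dual_bilin_self_pos ((LinearMap.mul ℝ A).domRestrict₁₂ V V) <| by
    intro ι _ x hx
    have hsum : ∑ i, (x i : A) * x i = 0 := hx
    exact funext fun i => Subtype.ext (congrFun (eq_zero_of_sum_mul_self_eq_zero hsum) i)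
  exact ⟨f, fun a ha ha0 => hf ⟨a, ha⟩ (by simpa using ha0)⟩

end Separation

section RealRadical

theorem exists_isSumSq_map_eq {R S : Type*} [NonAssocSemiring R] [NonAssocSemiring S]
    {f : R →+* S} (hf : Function.Surjective f) {s : S} (hs : IsSumSq s) :
    ∃ r, IsSumSq r ∧ f r = s := by
  induction hs with
  | zero => exact ⟨0, .zero, map_zero f⟩
  | sq_add a _ ih =>
    obtain ⟨r, hr, rfl⟩ := ih
    obtain ⟨b, rfl⟩ := hf a
    exact ⟨b * b + r, .sq_add b hr, by simp⟩

theorem exists_fin_sum_sq_eq {R : Type*} [CommSemiring R] {s : R} (hs : IsSumSq s) :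
    ∃ (k : ℕ) (q : Fin k → R), ∑ j, q j ^ 2 = s := by
  induction hs with
  | zero => exact ⟨0, 0, by simp⟩
  | sq_add a _ ih =>
    obtain ⟨k, q, rfl⟩ := ih
    exact ⟨k + 1, Fin.cons a q, by simp [Fin.sum_univ_succ, sq]⟩

section AddSaturation

variable {S : Type*} [CommSemiring S]

/-- The smallest ideal above `K` that contains both summands of each of its sums, i.e. the
saturation of `K` for the preorder `a ≤ a + b`. -/
def addSaturation (K : Ideal S) : Ideal S where
  carrier := {a | ∃ b, a + b ∈ K}
  zero_mem' := ⟨0, by simp⟩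
  add_mem' := by
    rintro a a' ⟨b, hb⟩ ⟨b', hb'⟩
    exact ⟨b + b', by simpa [add_add_add_comm] using add_mem hb hb'⟩
  smul_mem' := by
    rintro c a ⟨b, hb⟩
    exact ⟨c * b, by simpa [mul_add] using K.mul_mem_left c hb⟩

theorem mem_addSaturation {K : Ideal S} {a : S} : a ∈ addSaturation K ↔ ∃ b, a + b ∈ K :=
  Iff.rfl

theorem exists_add_pow_eq_pow_add (a b : S) (k : ℕ) : ∃ c, (a + b) ^ k = a ^ k + c := by
  induction k with
  | zero => exact ⟨0, by simp⟩
  | succ k ih =>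
    obtain ⟨c, hc⟩ := ih
    exact ⟨a ^ k * b + c * (a + b), by rw [pow_succ, hc]; ring⟩

theorem mem_radical_addSaturation_of_add_mem {K : Ideal S} {a b : S}
    (h : a + b ∈ (addSaturation K).radical) : a ∈ (addSaturation K).radical := by
  obtain ⟨k, d, hd⟩ := Ideal.mem_radical_iff.1 h
  obtain ⟨c, hc⟩ := exists_add_pow_eq_pow_add a b k
  exact Ideal.mem_radical_iff.2 ⟨k, c + d, by rwa [← add_assoc, ← hc]⟩

end AddSaturation

variable {R : Type*} [CommRing R]

/-- The square of `p` as an element of the semiring of sums of squares. -/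
def sqSumSq (p : R) : Subsemiring.sumSq R := ⟨p * p, by simp⟩

theorem sqSumSq_mul (p q : R) : sqSumSq (p * q) = sqSumSq p * sqSumSq q :=
  Subtype.ext (mul_mul_mul_comm p q p q)

theorem sqSumSq_add_add_sqSumSq_sub (p q : R) :
    sqSumSq (p + q) + sqSumSq (p - q) = (sqSumSq p + sqSumSq q) + (sqSumSq p + sqSumSq q) :=
  Subtype.ext (by simp only [sqSumSq, Subsemiring.coe_add]; ring)

/-- The radical, in the semiring of sums of squares, of the saturation of `I`: it consists of the
sums of squares `s` with `s ^ k + b ∈ I` for some `k` and some sum of squares `b`. -/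
def sumSqRadical (I : Ideal R) : Ideal (Subsemiring.sumSq R) :=
  (addSaturation (I.comap (Subsemiring.sumSq R).subtype)).radical

/-- The real radical of an ideal. Membership of `p` is expressed through its square in the semiring
of sums of squares, where closure under addition reduces to saturation by the parallelogram
identity; `mem_realRadical_iff` is the usual description. -/
def realRadical (I : Ideal R) : Ideal R where
  carrier := {p | sqSumSq p ∈ sumSqRadical I}
  zero_mem' := by
    have hzero : sqSumSq (0 : R) = 0 := Subtype.ext (zero_mul 0)
    simp [hzero]
  add_mem' {p q} hp hq := by
    refine mem_radical_addSaturation_of_add_mem (b := sqSumSq (p - q)) ?_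
    rw [sqSumSq_add_add_sqSumSq_sub]
    exact add_mem (add_mem hp hq) (add_mem hp hq)
  smul_mem' r p hp := by
    change sqSumSq (r * p) ∈ sumSqRadical I
    rw [sqSumSq_mul]
    exact Ideal.mul_mem_left _ _ hp

theorem mem_realRadical_iff {I : Ideal R} {p : R} :
    p ∈ realRadical I ↔ ∃ m, ∃ s, IsSumSq s ∧ p ^ (2 * m) + s ∈ I := by
  change sqSumSq p ∈ sumSqRadical I ↔ _
  simp only [sumSqRadical, Ideal.mem_radical_iff, mem_addSaturation, Subtype.exists,
    Ideal.mem_comap, Subsemiring.mem_sumSq, sqSumSq]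
  simp [pow_mul, sq]

theorem le_realRadical (I : Ideal R) : I ≤ realRadical I := fun p hp =>
  mem_realRadical_iff.2 ⟨1, 0, .zero, by simpa [sq] using I.mul_mem_left p hp⟩

theorem mem_realRadical_of_mul_self_add_mem {I : Ideal R} {p s : R} (hs : IsSumSq s)
    (h : p * p + s ∈ realRadical I) : p ∈ realRadical I := by
  let σ : Subsemiring.sumSq R := ⟨s, by simpa using hs⟩
  have hsq : (sqSumSq p + σ) ^ 2 ∈ sumSqRadical I := by
    rw [sq]
    exact h
  exact mem_radical_addSaturation_of_add_mem (Ideal.mem_radical_of_pow_mem hsq)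

instance isFormallyReal_quotient_realRadical (I : Ideal R) :
    IsFormallyReal (R ⧸ realRadical I) := by
  refine .of_eq_zero_of_eq_zero_of_mul_self_add fun {s a} hs h => ?_
  obtain ⟨s, hs', rfl⟩ := exists_isSumSq_map_eq Ideal.Quotient.mk_surjective hs
  obtain ⟨a, rfl⟩ := Ideal.Quotient.mk_surjective a
  rw [← map_mul, ← map_add, Ideal.Quotient.eq_zero_iff_mem] at h
  exact Ideal.Quotient.eq_zero_iff_mem.2 (mem_realRadical_of_mul_self_add_mem hs' h)

end RealRadical

theorem exists_dual_pos_of_notMem_realRadical {R : Type*} [CommRing R] [Algebra ℝ R]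
    (I : Ideal R) (V : Submodule ℝ R) [FiniteDimensional ℝ V] :
    ∃ L : Module.Dual ℝ R,
      (∀ p ∈ realRadical I, L p = 0) ∧ ∀ p ∈ V, p ∉ realRadical I → 0 < L (p * p) := by
  let π := Ideal.Quotient.mkₐ ℝ (realRadical I)
  obtain ⟨f, hf⟩ := exists_dual_mul_self_pos (V.map π.toLinearMap)
  have hπ (p : R) : π p = 0 ↔ p ∈ realRadical I := Ideal.Quotient.eq_zero_iff_mem
  refine ⟨f ∘ₗ π.toLinearMap, fun p hp => ?_, fun p hpV hp => ?_⟩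
  · simp [(hπ p).2 hp]
  · simpa using hf (π p) ⟨p, hpV, rfl⟩ (mt (hπ p).1 hp)

section PosSemidef

variable {K M : Type*} [Field K] [LinearOrder K] [IsStrictOrderedRing K] [AddCommGroup M]
  [Module K M] {B C : M →ₗ[K] M →ₗ[K] K}

theorem ker_add_le_ker_of_isPosSemidef (hB : B.IsPosSemidef) (hC : C.IsPosSemidef) :
    LinearMap.ker (B + C) ≤ LinearMap.ker C := by
  intro x hx
  have hsum : B x x + C x x = 0 := LinearMap.congr_fun (LinearMap.mem_ker.1 hx) x
  have hCx : C x x = 0 := by linarith [hB.nonneg x, hC.nonneg x]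
  exact (LinearMap.BilinForm.apply_apply_same_eq_zero_iff C hC.nonneg hC.isSymm).1 hCx

theorem ker_le_ker_of_finrank_range_add_le_s7 [FiniteDimensional K M] (hB : B.IsPosSemidef)
    (hC : C.IsPosSemidef)
    (h : Module.finrank K (LinearMap.range (B + C)) ≤ Module.finrank K (LinearMap.range B)) :
    LinearMap.ker B ≤ LinearMap.ker C := by
  have hle : LinearMap.ker (B + C) ≤ LinearMap.ker B :=
    add_comm C B ▸ ker_add_le_ker_of_isPosSemidef hC hB
  have hker : LinearMap.ker (B + C) = LinearMap.ker B := by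
    refine Submodule.eq_of_le_of_finrank_le hle ?_
    have hrank_add := LinearMap.finrank_range_add_finrank_ker (B + C)
    have hrank := LinearMap.finrank_range_add_finrank_ker B
    lia
  exact hker ▸ ker_add_le_ker_of_isPosSemidef hB hC

end PosSemidef

section MomentMatrices

variable {n m s t : ℕ} {h : Fin m → MP n} {L Ls : Module.Dual ℝ (MP n)} {p : MP n}

theorem RxT_eq_spanMon (n s : ℕ) : RxT n s = spanMon {α | mdeg α ≤ s} :=
  restrictSupport_eq_span ..

theorem mul_mem_of_forall_monomial_mul_mem {N : Submodule ℝ (MP n)} {g u : MP n}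
    (hN : ∀ α, mdeg α ≤ s → monomial α 1 * g ∈ N) (hu : u.totalDegree ≤ s) : u * g ∈ N := by
  have hle : spanMon {α | mdeg α ≤ s} ≤ N.comap (LinearMap.mulRight ℝ g) :=
    Submodule.span_le.2 (by rintro _ ⟨α, hα, rfl⟩; exact hN α hα)
  exact hle (RxT_eq_spanMon n s ▸ (mem_restrictTotalDegree ..).2 hu)

theorem mem_momKer_iff :
    p ∈ momKer L s ↔ p.totalDegree ≤ s ∧ ∀ q : MP n, q.totalDegree ≤ s → L (p * q) = 0 := by
  refine and_congr_right fun _ => ⟨fun hp q hq => ?_, fun hp β hβ => hp _ ?_⟩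
  · rw [mul_comm]
    refine mul_mem_of_forall_monomial_mul_mem (N := LinearMap.ker L) (fun β hβ => ?_) hq
    rw [LinearMap.mem_ker, mul_comm, hp β hβ]
  · exact (totalDegree_monomial β one_ne_zero).trans_le hβ

theorem coe_mem_momKer_iff {p : RxT n s} :
    (p : MP n) ∈ momKer L s ↔ p ∈ LinearMap.ker (momBil L s) := by
  have hdeg (q : RxT n s) : (q : MP n).totalDegree ≤ s := (mem_restrictTotalDegree ..).1 q.2
  rw [mem_momKer_iff, LinearMap.mem_ker, LinearMap.ext_iff]
  exact ⟨fun hp q => hp.2 q (hdeg q),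
    fun hp => ⟨hdeg p, fun q hq => hp ⟨q, (mem_restrictTotalDegree ..).2 hq⟩⟩⟩

theorem momBil_add (L L' : Module.Dual ℝ (MP n)) (s : ℕ) :
    momBil (L + L') s = momBil L s + momBil L' s :=
  rfl

theorem isPosSemidef_momBil (hL : momPSD L s) : (momBil L s).IsPosSemidef where
  eq p q := congrArg L (mul_comm (p : MP n) q)
  nonneg p := hL p ((mem_restrictTotalDegree ..).1 p.2)

theorem mem_momKer_iff_of_momPSD (hL : momPSD L s) (hp : p.totalDegree ≤ s) :
    p ∈ momKer L s ↔ L (p * p) = 0 := by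
  have hB := isPosSemidef_momBil hL
  have hmem : p ∈ RxT n s := (mem_restrictTotalDegree ..).2 hp
  exact (coe_mem_momKer_iff (p := ⟨p, hmem⟩)).trans
    (LinearMap.BilinForm.apply_apply_same_eq_zero_iff _ hB.nonneg hB.isSymm).symm

theorem mem_momKer_of_pow_succ_mem_momKer (hL : momPSD L s) {k : ℕ}
    (hk : (k + 1) * p.totalDegree ≤ s) (hp : p ^ (k + 1) ∈ momKer L s) : p ∈ momKer L s := by
  induction k with
  | zero => simpa using hp
  | succ k ih =>
    have hdeg {j : ℕ} (hj : j ≤ k + 1) : (p ^ j).totalDegree ≤ s :=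
      (totalDegree_pow p j).trans ((by gcongr; lia : _ ≤ (k + 1 + 1) * p.totalDegree).trans hk)
    refine ih ((by gcongr; lia : _ ≤ (k + 1 + 1) * p.totalDegree).trans hk) ?_
    rw [mem_momKer_iff_of_momPSD hL (hdeg le_rfl)]
    calc L (p ^ (k + 1) * p ^ (k + 1)) = L (p ^ (k + 1 + 1) * p ^ k) := by ring_nf
      _ = 0 := (mem_momKer_iff.1 hp).2 _ (hdeg k.le_succ)

theorem add_mem_Kpos (hL : L ∈ Kpos h t) (hLs : Ls ∈ Kpos h t) : L + Ls ∈ Kpos h t :=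
  ⟨fun g hg => by simp [hL.1 g hg, hLs.1 g hg],
    fun p hp => add_nonneg (hL.2 p hp) (hLs.2 p hp)⟩

theorem Generic.momKer_subset (hLs : Generic h t Ls) (hL : L ∈ Kpos h t) :
    momKer Ls (t / 2) ⊆ momKer L (t / 2) := by
  intro p hp
  have hmem : p ∈ RxT n (t / 2) := (mem_restrictTotalDegree ..).2 hp.1
  have hle : LinearMap.ker (momBil Ls (t / 2)) ≤ LinearMap.ker (momBil L (t / 2)) :=
    ker_le_ker_of_finrank_range_add_le_s7 (isPosSemidef_momBil hLs.1.2) (isPosSemidef_momBil hL.2)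
      (momBil_add Ls L _ ▸ hLs.2 _ (add_mem_Kpos hLs.1 hL))
  exact coe_mem_momKer_iff.2 (hle ((coe_mem_momKer_iff (p := ⟨p, hmem⟩)).1 hp))

theorem Hset_subset_span_range (h : Fin m → MP n) (t : ℕ) :
    Hset h t ⊆ Ideal.span (Set.range h) := by
  rintro _ ⟨α, j, -, rfl⟩
  exact Ideal.mul_mem_left _ _ (Ideal.subset_span ⟨j, rfl⟩)

theorem exists_mem_Kpos_momKer_subset_realRadical (h : Fin m → MP n) (t : ℕ) :
    ∃ L ∈ Kpos h t, momKer L (t / 2) ⊆ realRadical (Ideal.span (Set.range h)) := by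
  obtain ⟨L, hL0, hLpos⟩ :=
    exists_dual_pos_of_notMem_realRadical (Ideal.span (Set.range h)) (RxT n (t / 2))
  simp only [mem_restrictTotalDegree] at hLpos
  refine ⟨L, ⟨fun g hg => hL0 g (le_realRadical _ (Hset_subset_span_range h t hg)),
    fun p hp => ?_⟩, fun p hp => ?_⟩
  · by_cases hpI : p ∈ realRadical (Ideal.span (Set.range h))
    · exact (hL0 _ (Ideal.mul_mem_left _ p hpI)).ge
    · exact (hLpos p hp hpI).le
  · by_contra hpI
    exact (hLpos p hp.1 hpI).ne' ((mem_momKer_iff.1 hp).2 p hp.1)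

theorem span_Hset_union_Wset_subset_realRadical (hLs : Generic h t Ls) :
    (Submodule.span ℝ (Hset h t ∪ Wset h t Ls) : Set (MP n)) ⊆
      realRadical (Ideal.span (Set.range h)) := by
  obtain ⟨L, hL, hker⟩ := exists_mem_Kpos_momKer_subset_realRadical h t
  refine Submodule.span_le (p := (realRadical _).restrictScalars ℝ).2 (Set.union_subset ?_ ?_)
  · exact (Hset_subset_span_range h t).trans (le_realRadical _)
  · rintro _ ⟨α, g, -, hg, rfl⟩
    exact Ideal.mul_mem_left _ _ (hker (hLs.momKer_subset hL hg))

theorem mul_mem_span_Hset {u : MP n} {j : Fin m}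
    (hdeg : u.totalDegree + (h j).totalDegree ≤ t) : u * h j ∈ Submodule.span ℝ (Hset h t) :=
  mul_mem_of_forall_monomial_mul_mem
    (fun α hα => Submodule.subset_span ⟨α, j, (Nat.add_le_add_right hα _).trans hdeg, rfl⟩) le_rfl

open Filter

theorem eventually_mem_span_Hset (hp : p ∈ Ideal.span (Set.range h)) :
    ∀ᶠ t in atTop, p ∈ Submodule.span ℝ (Hset h t) := by
  obtain ⟨c, rfl⟩ := Ideal.mem_span_range_iff_exists_fun.1 hp
  filter_upwards [eventually_all.2 fun j =>
    eventually_ge_atTop ((c j).totalDegree + (h j).totalDegree)] with t ht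
  exact sum_mem fun j _ => mul_mem_span_Hset (ht j)

theorem eventually_forall_momPSD_nonneg {σ : MP n} (hσ : IsSumSq σ) :
    ∀ᶠ s in atTop, ∀ L : Module.Dual ℝ (MP n), momPSD L s → 0 ≤ L σ := by
  induction hσ with
  | zero => simp
  | sq_add q _ ih =>
    filter_upwards [ih, eventually_ge_atTop q.totalDegree] with s hs hq L hL
    rw [map_add]
    exact add_nonneg (hL q hq) (hs L hL)

theorem eventually_forall_mem_momKer (hp : p ∈ realRad (Ideal.span (Set.range h))) :
    ∀ᶠ t in atTop, ∀ L ∈ Kpos h t, p ∈ momKer L (t / 2) := by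
  obtain ⟨k, hk, d, q, hI⟩ := hp
  obtain ⟨k, rfl⟩ := Nat.exists_eq_succ_of_ne_zero hk.ne'
  have hσ : IsSumSq (∑ j, q j ^ 2) := .sum fun j _ => (IsSquare.sq (q j)).isSumSq
  have hhalf : Tendsto (fun t => t / 2) atTop atTop := Nat.tendsto_div_const_atTop two_ne_zero
  filter_upwards [eventually_mem_span_Hset hI,
    hhalf.eventually (eventually_forall_momPSD_nonneg hσ),
    hhalf.eventually (eventually_ge_atTop ((k + 1) * p.totalDegree))] with t hspan hnonneg hdeg L hL
  refine mem_momKer_of_pow_succ_mem_momKer hL.2 hdeg ?_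
  have hpow : (p ^ (k + 1)).totalDegree ≤ t / 2 := (totalDegree_pow p _).trans hdeg
  have hzero : L (p ^ (k + 1) * p ^ (k + 1)) + L (∑ j, q j ^ 2) = 0 := by
    have hker := Submodule.span_le (p := LinearMap.ker L).2 hL.1 hspan
    rwa [LinearMap.mem_ker, map_add, two_mul, pow_add] at hker
  rw [mem_momKer_iff_of_momPSD hL.2 hpow]
  linarith [hL.2 _ hpow, hnonneg L hL.2]

theorem momKer_subset_Wset : momKer Ls (t / 2) ⊆ Wset h t Ls := fun p hp =>
  ⟨0, p, by simp [mdeg], hp, by simp⟩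

theorem coe_realRadical_eq_realRad (I : Ideal (MP n)) :
    (realRadical I : Set (MP n)) = realRad I := by
  ext p
  rw [SetLike.mem_coe, mem_realRadical_iff]
  constructor
  · rintro ⟨k, s, hs, hI⟩
    obtain ⟨d, q, hq⟩ := exists_fin_sum_sq_eq ((IsSumSq.mul_self p).mul hs)
    refine ⟨k + 1, k.succ_pos, d, q, ?_⟩
    convert Ideal.mul_mem_left I (p * p) hI using 1
    rw [hq]
    ring
  · rintro ⟨k, -, d, q, hI⟩
    exact ⟨k, _, .sum fun j _ => (IsSquare.sq (q j)).isSumSq, hI⟩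

end MomentMatrices

theorem realRad_eq_iUnion_span_general {n m : ℕ} (h : Fin m → MP n)
    (Lgen : ℕ → Module.Dual ℝ (MP n)) (hgen : ∀ t, Generic h t (Lgen t)) :
    realRad (Ideal.span (Set.range h)) =
      (⋃ t : ℕ, (Submodule.span ℝ (Hset h t ∪ Wset h t (Lgen t)) : Set (MP n))) ∧
    (∀ L : Module.Dual ℝ (MP n),
      (∀ p ∈ realRad (Ideal.span (Set.range h)), L p = 0) ↔
      (∀ t : ℕ, ∀ g ∈ Hset h t ∪ Wset h t (Lgen t), L g = 0)) := by
  have hunion : realRad (Ideal.span (Set.range h)) =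
      ⋃ t : ℕ, (Submodule.span ℝ (Hset h t ∪ Wset h t (Lgen t)) : Set (MP n)) := by
    refine Set.Subset.antisymm (fun p hp => ?_) (Set.iUnion_subset fun t => ?_)
    · obtain ⟨t, ht⟩ := (eventually_forall_mem_momKer hp).exists
      have hW : p ∈ Wset h t (Lgen t) := momKer_subset_Wset (ht _ (hgen t).1)
      exact Set.mem_iUnion.2 ⟨t, Submodule.subset_span (.inr hW)⟩
    · rw [← coe_realRadical_eq_realRad]
      exact span_Hset_union_Wset_subset_realRadical (hgen t)
  refine ⟨hunion, fun L => ?_⟩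
  simp only [hunion, Set.mem_iUnion, SetLike.mem_coe, forall_exists_index]
  rw [forall_comm]
  exact forall_congr' fun t => Submodule.span_le (p := LinearMap.ker L)

/-- If the real variety `V_ℝ(I)` is finite, then
`√[ℝ]I = ⋃_t Span_ℝ(G_t)` with `G_t = H_t ∪ W_t`; consequently a linear functional vanishes on
`√[ℝ]I` iff it vanishes on every `G_t`. -/
theorem realRad_eq_iUnion_span {n m : ℕ} (h : Fin m → MP n)
    (hfin : {v : Fin n → ℝ | ∀ j, eval v (h j) = 0}.Finite)
    (Lgen : ℕ → Module.Dual ℝ (MP n)) (hgen : ∀ t, Generic h t (Lgen t)) :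
    realRad (Ideal.span (Set.range h)) =
      (⋃ t : ℕ, (Submodule.span ℝ (Hset h t ∪ Wset h t (Lgen t)) : Set (MP n))) ∧
    (∀ L : Module.Dual ℝ (MP n),
      (∀ p ∈ realRad (Ideal.span (Set.range h)), L p = 0) ↔
      (∀ t : ℕ, ∀ g ∈ Hset h t ∪ Wset h t (Lgen t), L g = 0)) :=
  realRad_eq_iUnion_span_general h Lgen hgen
end
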